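/- Let A be a finite alphabet, let X ⊆ A^ℤ be a transitive shift of finite type with left shift T, and let Y ⊆ A^ℤ be any shift with left shift S. Then for every continuous f ∈ C(X × Y), the functional ψ_f : M_S(Y) → ℝ, ψ_f(ν) = min { ∫ f dλ : λ ∈ M_{T×S}(X × Y), (π_Y)_* λ = ν }, is continuous and affine on M_S(Y) with the weak* topology. In particular, there exists an ergodic measure ν_0 ∈ ∂_e M_S(Y) with ψ_f(ν_0) = α(f), i.e. an ergodic α-maximizing measure exists. -/

import Mathlib

open MeasureTheory Filter Topology
open scoped ENNReal NNReal

noncomputable section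

/-- The left shift on `A^ℤ`: `(σ x)(j) = x(j+1)`. -/
def lshift {A : Type*} (x : ℤ → A) : ℤ → A := fun j => x (j + 1)

/-- The set of invariant Borel probability measures of a map. -/
def invMeas {Z : Type*} [MeasurableSpace Z] (U : Z → Z) : Set (ProbabilityMeasure Z) :=
  {μ | μ.toMeasure.map U = μ.toMeasure}

/-- `ψ_f(ν) = min { ∫ f dλ : λ ∈ M_{T×S}(X × Y), (π_Y)_* λ = ν }`. -/
def psi2 {X Y : Type*} [MeasurableSpace X] [MeasurableSpace Y]
    (T : X → X) (S : Y → Y) (f : X × Y → ℝ) (ν : ProbabilityMeasure Y) : ℝ :=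
  sInf {r | ∃ lam ∈ invMeas (Prod.map T S), lam.toMeasure.map Prod.snd = ν.toMeasure ∧
    r = ∫ p, f p ∂lam.toMeasure}

/-- `α(f) = sup_{ν ∈ M_S(Y)} ψ_f(ν)`. -/
def alpha2 {X Y : Type*} [MeasurableSpace X] [MeasurableSpace Y]
    (T : X → X) (S : Y → Y) (f : X × Y → ℝ) : ℝ :=
  sSup {r | ∃ ν ∈ invMeas S, r = psi2 T S f ν}

/-!
A measure `λ` over `ν` integrates every Birkhoff average of `f` to `∫ f dλ`, so `ψ_f(ν)` is at least
the integral against `ν` of the fibrewise minimum of the `N`-th Birkhoff average. Conversely, if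
these integrals stay below `c` for arbitrarily long averages, then the empirical measures along
measurably chosen almost minimizing points accumulate at an invariant measure over `ν` whose
integral is at most `c`. When minimizing orbit blocks of length `N` can be glued in `X` at a cost
independent of `N`, the fibrewise minima of the averages of length `N * n` hardly exceed the
averages of those of length `N`. Hence `ψ_f` is a uniform limit on `M_S(Y)` of functionals
`ν ↦ ∫ g dν` with `g` continuous, which makes it continuous and affine. Its maximizers form a
compact face of `M_S(Y)`, whose extreme points are ergodic.
-/

section InvariantMeasures

variable {Z : Type*} [MeasurableSpace Z] {U : Z → Z}

lemma measurePreserving_of_mem_invMeas (hU : Measurable U) {μ : ProbabilityMeasure Z}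
    (hμ : μ ∈ invMeas U) : MeasurePreserving U μ.toMeasure μ.toMeasure :=
  ⟨hU, hμ⟩

lemma integral_birkhoffAverage {μ : Measure Z} (hU : MeasurePreserving U μ μ) {g : Z → ℝ}
    (hg : Integrable g μ) {n : ℕ} (hn : n ≠ 0) :
    ∫ z, birkhoffAverage ℝ U g n z ∂μ = ∫ z, g z ∂μ := by
  have hcomp (k : ℕ) : ∫ z, g (U^[k] z) ∂μ = ∫ z, g z ∂μ := by
    have hk := hU.iterate k
    rw [← integral_map hk.aemeasurable (by rw [hk.map_eq]; exact hg.1), hk.map_eq]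
  simp only [birkhoffAverage, birkhoffSum, smul_eq_mul]
  rw [integral_const_mul, integral_finsetSum (f := fun k z => g (U^[k] z)) _ fun k _ =>
    (hU.iterate k).integrable_comp_of_integrable hg]
  simp only [hcomp, Finset.sum_const, Finset.card_range, nsmul_eq_mul]
  exact inv_mul_cancel_left₀ (Nat.cast_ne_zero.2 hn) _

end InvariantMeasures

section BirkhoffAverages

variable {Z : Type*} {U : Z → Z}

lemma birkhoffSum_mul (U : Z → Z) (g : Z → ℝ) (N n : ℕ) (z : Z) :
    birkhoffSum U g (N * n) z = birkhoffSum U^[N] (birkhoffSum U g N) n z := by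
  induction n with
  | zero => simp only [mul_zero, birkhoffSum_zero]
  | succ n ih => rw [Nat.mul_succ, birkhoffSum_add, ih, birkhoffSum_succ, Function.iterate_mul]

lemma birkhoffAverage_mul (U : Z → Z) (g : Z → ℝ) (N n : ℕ) (z : Z) :
    birkhoffAverage ℝ U g (N * n) z =
      birkhoffAverage ℝ U^[N] (birkhoffAverage ℝ U g N) n z := by
  have havg : birkhoffAverage ℝ U g N = fun w => (N : ℝ)⁻¹ * birkhoffSum U g N w := rfl
  rw [havg]
  simp only [birkhoffAverage, birkhoffSum_mul, smul_eq_mul]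
  simp only [birkhoffSum, ← Finset.mul_sum, Nat.cast_mul, mul_inv]
  ring

lemma birkhoffAverage_snd {X Y : Type*} (T : X → X) (S : Y → Y) (h : Y → ℝ) (n : ℕ) (p : X × Y) :
    birkhoffAverage ℝ (Prod.map T S) (fun q => h q.2) n p = birkhoffAverage ℝ S h n p.2 := by
  simp only [birkhoffAverage, birkhoffSum, Prod.map_iterate, Prod.map_snd]

lemma abs_birkhoffAverage_comp_sub_le {g : Z → ℝ} {C : ℝ} (hC : ∀ z, |g z| ≤ C) (n : ℕ) (z : Z) :
    |birkhoffAverage ℝ U (fun w => g (U w)) n z - birkhoffAverage ℝ U g n z| ≤ 2 * C / n := by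
  have hshift : birkhoffAverage ℝ U (fun w => g (U w)) n z = birkhoffAverage ℝ U g n (U z) := by
    simp only [birkhoffAverage, birkhoffSum, ← Function.iterate_succ_apply',
      Function.iterate_succ_apply]
  rw [hshift, ← Real.dist_eq, dist_birkhoffAverage_apply_birkhoffAverage, Real.dist_eq]
  gcongr
  linarith [abs_sub (g (U^[n] z)) (g z), hC (U^[n] z), hC z]

lemma continuous_birkhoffAverage [TopologicalSpace Z] (hU : Continuous U) {g : Z → ℝ}
    (hg : Continuous g) (n : ℕ) : Continuous (birkhoffAverage ℝ U g n) := by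
  have hsum : Continuous (birkhoffSum U g n) :=
    continuous_finsetSum _ fun k _ => hg.comp (hU.iterate k)
  exact hsum.const_smul (n : ℝ)⁻¹

end BirkhoffAverages

section WeakTopology

variable {Z : Type*} [TopologicalSpace Z] [MeasurableSpace Z] [BorelSpace Z]
  [HasOuterApproxClosed Z]

lemma measure_ext_of_integral_continuous {μ ν : Measure Z}
    [IsFiniteMeasure μ] [IsFiniteMeasure ν]
    (h : ∀ g : Z → ℝ, Continuous g → ∫ z, g z ∂μ = ∫ z, g z ∂ν) : μ = ν :=
  ext_of_forall_integral_eq_of_IsFiniteMeasure fun g => h g g.continuous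

lemma isClosed_invMeas {U : Z → Z} (hU : Continuous U) : IsClosed (invMeas U) := by
  have h : invMeas U = {μ : ProbabilityMeasure Z | μ.map hU.aemeasurable = μ} := by
    ext μ
    simp only [invMeas, Set.mem_ofPred_eq]
    rw [← ProbabilityMeasure.toMeasure_injective.eq_iff, ProbabilityMeasure.toMeasure_map]
  rw [h]
  exact isClosed_eq (ProbabilityMeasure.continuous_map hU) continuous_id

end WeakTopology

section CompactSpace

variable {Z : Type*} [TopologicalSpace Z] [CompactSpace Z]

lemma exists_forall_abs_le_of_continuous {g : Z → ℝ} (hg : Continuous g) :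
    ∃ C, ∀ z, |g z| ≤ C := by
  obtain ⟨C, hC⟩ := isCompact_univ.exists_bound_of_continuousOn hg.continuousOn
  exact ⟨C, fun z => hC z (Set.mem_univ z)⟩

variable [MeasurableSpace Z] [BorelSpace Z]

lemma integrable_of_continuous {μ : Measure Z} [IsFiniteMeasure μ] {g : Z → ℝ}
    (hg : Continuous g) : Integrable g μ :=
  hg.integrable_of_hasCompactSupport (HasCompactSupport.of_compactSpace g)

lemma continuous_integral_of_continuous {g : Z → ℝ} (hg : Continuous g) :
    Continuous fun μ : ProbabilityMeasure Z => ∫ z, g z ∂μ.toMeasure :=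
  ProbabilityMeasure.continuous_integral_continuousMap (⟨g, hg⟩ : C(Z, ℝ))

lemma integral_convexCombination {ν ν₁ ν₂ : ProbabilityMeasure Z} {t : ℝ≥0} (ht : t ≤ 1)
    (h : ν.toMeasure = (t : ℝ≥0∞) • ν₁.toMeasure + (1 - (t : ℝ≥0∞)) • ν₂.toMeasure)
    {g : Z → ℝ} (hg : Continuous g) :
    ∫ z, g z ∂ν.toMeasure =
      (t : ℝ) * ∫ z, g z ∂ν₁.toMeasure + (1 - (t : ℝ)) * ∫ z, g z ∂ν₂.toMeasure := by
  rw [h, integral_add_measure ((integrable_of_continuous hg).smul_measure (by finiteness))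
      ((integrable_of_continuous hg).smul_measure (by finiteness)),
    integral_smul_measure, integral_smul_measure,
    ENNReal.toReal_sub_of_le (by exact_mod_cast ht) (by finiteness)]
  simp only [ENNReal.coe_toReal, ENNReal.toReal_one, smul_eq_mul]

lemma exists_integral_eq_integral_birkhoffAverage {U : Z → Z} (hU : Continuous U)
    (μ : ProbabilityMeasure Z) {m : ℕ} (hm : m ≠ 0) :
    ∃ κ : ProbabilityMeasure Z, ∀ g : Z → ℝ, Continuous g →
      ∫ z, g z ∂κ.toMeasure = ∫ z, birkhoffAverage ℝ U g m z ∂μ.toMeasure := by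
  have hmap (k : ℕ) : IsProbabilityMeasure (μ.toMeasure.map U^[k]) :=
    Measure.isProbabilityMeasure_map (hU.iterate k).aemeasurable
  let κ : Measure Z := (m : ℝ≥0∞)⁻¹ • ∑ k ∈ Finset.range m, μ.toMeasure.map U^[k]
  have hκ : IsProbabilityMeasure κ := by
    constructor
    simp only [κ, Measure.smul_apply, Measure.finsetSum_apply, measure_univ, Finset.sum_const,
      Finset.card_range, nsmul_eq_mul, mul_one, smul_eq_mul]
    exact ENNReal.inv_mul_cancel (Nat.cast_ne_zero.2 hm) (ENNReal.natCast_ne_top m)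
  refine ⟨⟨κ, hκ⟩, fun g hg => ?_⟩
  simp only [ProbabilityMeasure.coe_mk, κ, birkhoffAverage, birkhoffSum, smul_eq_mul]
  rw [integral_smul_measure, integral_finsetSum_measure fun k _ => integrable_of_continuous hg,
    integral_const_mul, integral_finsetSum (f := fun k z => g (U^[k] z)) _ fun k _ =>
      integrable_of_continuous (hg.comp (hU.iterate k))]
  simp only [ENNReal.toReal_inv, ENNReal.toReal_natCast, smul_eq_mul]
  congr! 2 with k
  exact integral_map (hU.iterate k).aemeasurable hg.aestronglyMeasurable

variable [T2Space Z] [HasOuterApproxClosed Z] {U : Z → Z}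

-- Krylov–Bogolyubov: an ultrafilter limit of the empirical averages of `μ n` is invariant.
lemma exists_mem_invMeas_tendsto_integral_birkhoffAverage (hU : Continuous U)
    (μ : ℕ → ProbabilityMeasure Z) {m : ℕ → ℕ} (hm₀ : ∀ n, m n ≠ 0)
    (hm : Tendsto m atTop atTop) :
    ∃ lam ∈ invMeas U, ∀ g : Z → ℝ, Continuous g →
      Tendsto (fun n => ∫ z, birkhoffAverage ℝ U g (m n) z ∂(μ n).toMeasure) (hyperfilter ℕ)
        (𝓝 (∫ z, g z ∂lam.toMeasure)) := by
  choose κ hκ using fun n => exists_integral_eq_integral_birkhoffAverage hU (μ n) (hm₀ n)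
  obtain ⟨lam, -, hlam⟩ := isCompact_univ.ultrafilter_le_nhds ((hyperfilter ℕ).map κ) (by simp)
  have hlim (g : Z → ℝ) (hg : Continuous g) :
      Tendsto (fun n => ∫ z, birkhoffAverage ℝ U g (m n) z ∂(μ n).toMeasure) (hyperfilter ℕ)
        (𝓝 (∫ z, g z ∂lam.toMeasure)) := by
    simpa only [Function.comp_def, hκ _ g hg] using
      ((continuous_integral_of_continuous hg).tendsto lam).comp
        (show Tendsto κ (hyperfilter ℕ) (𝓝 lam) from hlam)
  refine ⟨lam, ?_, hlim⟩
  have : IsProbabilityMeasure (lam.toMeasure.map U) :=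
    Measure.isProbabilityMeasure_map hU.aemeasurable
  refine measure_ext_of_integral_continuous fun g hg => ?_
  rw [integral_map hU.aemeasurable hg.aestronglyMeasurable]
  obtain ⟨C, hC⟩ := exists_forall_abs_le_of_continuous hg
  have hdiff (n : ℕ) : ‖∫ z, birkhoffAverage ℝ U (fun w => g (U w)) (m n) z ∂(μ n).toMeasure -
      ∫ z, birkhoffAverage ℝ U g (m n) z ∂(μ n).toMeasure‖ ≤ 2 * C / m n := by
    rw [← integral_sub
      (f := birkhoffAverage ℝ U (fun w => g (U w)) (m n))
      (integrable_of_continuous (continuous_birkhoffAverage hU (hg.comp hU) (m n)))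
      (integrable_of_continuous (continuous_birkhoffAverage hU hg (m n)))]
    refine (norm_integral_le_of_norm_le_const
      (ae_of_all _ (abs_birkhoffAverage_comp_sub_le hC (m n)))).trans_eq ?_
    rw [probReal_univ, mul_one]
  have hzero : Tendsto (fun n => 2 * C / m n) (hyperfilter ℕ) (𝓝 0) :=
    ((tendsto_natCast_atTop_atTop.comp hm).const_div_atTop (2 * C)).mono_left
      Nat.hyperfilter_le_atTop
  exact sub_eq_zero.1 <| tendsto_nhds_unique
    ((hlim _ (hg.comp hU)).sub (hlim g hg)) (squeeze_zero_norm hdiff hzero)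

lemma nonempty_invMeas [Nonempty Z] (hU : Continuous U) : (invMeas U).Nonempty := by
  obtain ⟨z⟩ := ‹Nonempty Z›
  obtain ⟨lam, hlam, -⟩ := exists_mem_invMeas_tendsto_integral_birkhoffAverage hU
    (fun _ => ⟨Measure.dirac z, inferInstance⟩) Nat.succ_ne_zero (tendsto_add_atTop_nat 1)
  exact ⟨lam, hlam⟩

end CompactSpace

section ErgodicMaximizer

variable {Z : Type*} [MeasurableSpace Z] {U : Z → Z}

/-- A functional of probability measures is affine on `K` when it respects the convex combinations
of members of `K`. The combinations are formed in the space of measures, so that `K` need not lie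
in a vector space. -/
def AffineOnMeasures (ψ : ProbabilityMeasure Z → ℝ) (K : Set (ProbabilityMeasure Z)) : Prop :=
  ∀ ν₁ ∈ K, ∀ ν₂ ∈ K, ∀ t : ℝ≥0, t ≤ 1 → ∀ ν : ProbabilityMeasure Z,
    ν.toMeasure = (t : ℝ≥0∞) • ν₁.toMeasure + (1 - (t : ℝ≥0∞)) • ν₂.toMeasure →
    ψ ν = (t : ℝ) * ψ ν₁ + (1 - (t : ℝ)) * ψ ν₂

/-- An extreme point of a set of probability measures, with the segments formed in the space of
measures. -/
def IsExtremeMeasure (K : Set (ProbabilityMeasure Z)) (ν : ProbabilityMeasure Z) : Prop :=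
  ν ∈ K ∧ ∀ ν₁ ∈ K, ∀ ν₂ ∈ K, ∀ t : ℝ≥0, 0 < t → t < 1 →
    ν.toMeasure = (t : ℝ≥0∞) • ν₁.toMeasure + (1 - (t : ℝ≥0∞)) • ν₂.toMeasure → ν₁ = ν

lemma mem_invMeas_of_convexCombination (hU : Measurable U) {ν ν₁ ν₂ : ProbabilityMeasure Z}
    (h₁ : ν₁ ∈ invMeas U) (h₂ : ν₂ ∈ invMeas U) {s t : ℝ≥0∞}
    (h : ν.toMeasure = s • ν₁.toMeasure + t • ν₂.toMeasure) : ν ∈ invMeas U := by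
  change ν.toMeasure.map U = ν.toMeasure
  rw [h, Measure.map_add _ _ hU, Measure.map_smul, Measure.map_smul,
    show ν₁.toMeasure.map U = _ from h₁, show ν₂.toMeasure.map U = _ from h₂]

lemma IsExtremeMeasure.ergodic (hU : Measurable U) {ν : ProbabilityMeasure Z}
    (hν : IsExtremeMeasure (invMeas U) ν) : Ergodic U ν.toMeasure := by
  refine Ergodic.of_mem_extremePoints
    ⟨⟨measurePreserving_of_mem_invMeas hU hν.1, inferInstance⟩, ?_⟩
  rintro μ₁ ⟨hμ₁, hp₁⟩ μ₂ ⟨hμ₂, hp₂⟩ ⟨a, b, ha, hb, hab, hsum⟩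
  lift a to ℝ≥0 using ne_top_of_le_ne_top ENNReal.one_ne_top (hab ▸ le_self_add)
  have hb' : b = 1 - (a : ℝ≥0∞) := ENNReal.eq_sub_of_add_eq' (by finiteness) (add_comm b _ ▸ hab)
  have ha1 : a < 1 := by
    rw [hb', tsub_pos_iff_lt] at hb
    exact_mod_cast hb
  have heq := hν.2 ⟨μ₁, hp₁⟩ hμ₁.map_eq ⟨μ₂, hp₂⟩ hμ₂.map_eq a (by exact_mod_cast ha) ha1
    (by rw [← hsum, hb', ProbabilityMeasure.coe_mk, ProbabilityMeasure.coe_mk])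
  exact congrArg ProbabilityMeasure.toMeasure heq

lemma isExtremeMeasure_of_isExtremeMeasure_argmax {ψ : ProbabilityMeasure Z → ℝ}
    {K : Set (ProbabilityMeasure Z)} (hψ : AffineOnMeasures ψ K) {μ ν : ProbabilityMeasure Z}
    (hμ : IsMaxOn ψ K μ) (hν : IsExtremeMeasure (K ∩ ψ ⁻¹' {ψ μ}) ν) : IsExtremeMeasure K ν := by
  refine ⟨hν.1.1, fun ν₁ h₁ ν₂ h₂ t ht₀ ht₁ h => ?_⟩
  have hνμ : ψ ν = ψ μ := hν.1.2
  have hval := hψ ν₁ h₁ ν₂ h₂ t ht₁.le ν h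
  have hle₁ : ψ ν₁ ≤ ψ μ := hμ h₁
  have hle₂ : ψ ν₂ ≤ ψ μ := hμ h₂
  have ht₀' : (0 : ℝ) < t := ht₀
  have ht₁' : (t : ℝ) < 1 := ht₁
  have heq₁ : ψ ν₁ = ψ μ := by nlinarith [ht₀', ht₁']
  have heq₂ : ψ ν₂ = ψ μ := by nlinarith [ht₀', ht₁']
  exact hν.2 ν₁ ⟨h₁, heq₁⟩ ν₂ ⟨h₂, heq₂⟩ t ht₀ ht₁ h

variable [TopologicalSpace Z] [CompactSpace Z] [BorelSpace Z] [HasOuterApproxClosed Z]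

-- Krein–Milman in the locally convex space `C(Z, ℝ) → ℝ` of functionals with the product topology.
lemma exists_isExtremeMeasure {K : Set (ProbabilityMeasure Z)} (hK : IsCompact K)
    (hne : K.Nonempty) : ∃ ν, IsExtremeMeasure K ν := by
  let J : ProbabilityMeasure Z → C(Z, ℝ) → ℝ := fun ν g => ∫ z, g z ∂ν.toMeasure
  have hJ : Continuous J := continuous_pi fun g => continuous_integral_of_continuous g.continuous
  have hJinj : Function.Injective J := fun ν₁ ν₂ h =>
    ProbabilityMeasure.toMeasure_injective <|
      measure_ext_of_integral_continuous fun g hg => congrFun h ⟨g, hg⟩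
  obtain ⟨-, ⟨ν, hν, rfl⟩, hext⟩ := (hK.image hJ).extremePoints_nonempty (hne.image J)
  refine ⟨ν, hν, fun ν₁ h₁ ν₂ h₂ t ht₀ ht₁ h => hJinj ?_⟩
  refine hext ⟨ν₁, h₁, rfl⟩ ⟨ν₂, h₂, rfl⟩
    ⟨t, 1 - t, ht₀, sub_pos.2 ht₁, add_sub_cancel _ _, funext fun g => ?_⟩
  exact (integral_convexCombination ht₁.le h g.continuous).symm

lemma exists_ergodic_isMaxOn [T2Space Z] [Nonempty Z] (hU : Continuous U)
    {ψ : ProbabilityMeasure Z → ℝ} (hψ : ContinuousOn ψ (invMeas U))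
    (hψa : AffineOnMeasures ψ (invMeas U)) :
    ∃ ν ∈ invMeas U, Ergodic U ν.toMeasure ∧ IsMaxOn ψ (invMeas U) ν := by
  have hcl := isClosed_invMeas hU
  obtain ⟨μ, hμ, hmax⟩ := hcl.isCompact.exists_isMaxOn (nonempty_invMeas hU) hψ
  obtain ⟨ν, hν⟩ := exists_isExtremeMeasure
    (hψ.preimage_isClosed_of_isClosed hcl isClosed_singleton).isCompact ⟨μ, hμ, rfl⟩
  have hνμ : ψ ν = ψ μ := hν.1.2
  exact ⟨ν, hν.1.1, (isExtremeMeasure_of_isExtremeMeasure_argmax hψa hmax hν).ergodic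
    hU.measurable, fun ν' hν' => (hmax hν').trans_eq hνμ.symm⟩

end ErgodicMaximizer

section UniformLimitsOfIntegrals

variable {Z : Type*} [TopologicalSpace Z] [CompactSpace Z] [MeasurableSpace Z] [BorelSpace Z]
  {ψ : ProbabilityMeasure Z → ℝ}

lemma continuousOn_of_forall_abs_sub_integral_le {K : Set (ProbabilityMeasure Z)}
    (h : ∀ ε > 0, ∃ g : Z → ℝ, Continuous g ∧ ∀ ν ∈ K, |ψ ν - ∫ z, g z ∂ν.toMeasure| ≤ ε) :
    ContinuousOn ψ K := by
  refine continuousOn_of_uniform_approx_of_continuousOn fun u hu => ?_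
  obtain ⟨ε, hε, hεu⟩ := Metric.mem_uniformity_dist.1 hu
  obtain ⟨g, hg, hψg⟩ := h (ε / 2) (half_pos hε)
  exact ⟨_, (continuous_integral_of_continuous hg).continuousOn, fun ν hν =>
    hεu ((hψg ν hν).trans_lt (half_lt_self hε))⟩

lemma affineOnMeasures_of_forall_abs_sub_integral_le {U : Z → Z} (hU : Measurable U)
    (h : ∀ ε > 0, ∃ g : Z → ℝ, Continuous g ∧
      ∀ ν ∈ invMeas U, |ψ ν - ∫ z, g z ∂ν.toMeasure| ≤ ε) :
    AffineOnMeasures ψ (invMeas U) := by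
  intro ν₁ h₁ ν₂ h₂ t ht ν hν
  refine eq_of_abs_sub_le_all fun ε hε => ?_
  obtain ⟨g, hg, hψg⟩ := h (ε / 2) (half_pos hε)
  have hb := abs_le.1 (hψg ν (mem_invMeas_of_convexCombination hU h₁ h₂ hν))
  have hb₁ := abs_le.1 (hψg ν₁ h₁)
  have hb₂ := abs_le.1 (hψg ν₂ h₂)
  rw [integral_convexCombination ht hν hg] at hb
  have ht₀ : (0 : ℝ) ≤ t := t.2
  have ht₁ : (0 : ℝ) ≤ 1 - t := sub_nonneg.2 (by exact_mod_cast ht)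
  rw [abs_le]
  constructor <;> nlinarith [ht₀, ht₁]

end UniformLimitsOfIntegrals

section RelativeMinimum

lemma exists_measurable_lt {X Y : Type*} [TopologicalSpace X] [TopologicalSpace.SeparableSpace X]
    [Nonempty X] [MeasurableSpace X] [MeasurableSpace Y] {h : X × Y → ℝ} {c : Y → ℝ}
    (hcont : ∀ y, Continuous fun x => h (x, y)) (hmeas : ∀ x, Measurable fun y => h (x, y))
    (hc : Measurable c) (hlt : ∀ y, ∃ x, h (x, y) < c y) :
    ∃ φ : Y → X, Measurable φ ∧ ∀ y, h (φ y, y) < c y := by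
  classical
  let d := TopologicalSpace.denseSeq X
  have hd (y : Y) : ∃ k, h (d k, y) < c y :=
    (TopologicalSpace.denseRange_denseSeq X).exists_mem_open
      (isOpen_lt (hcont y) continuous_const) (hlt y)
  refine ⟨fun y => d (Nat.find (hd y)), ?_, fun y => Nat.find_spec (hd y)⟩
  exact measurable_from_nat.comp
    (measurable_find hd fun k => measurableSet_lt (hmeas (d k)) hc)

/-- The minimum over the fibre of `y` of the `n`-th Birkhoff average of `f` along `T × S`. Its
integrals approximate the functional `ψ_f`. -/
def fiberInf {X Y : Type*} (T : X → X) (S : Y → Y) (f : X × Y → ℝ) (n : ℕ) (y : Y) : ℝ :=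
  ⨅ x, birkhoffAverage ℝ (Prod.map T S) f n (x, y)

variable {X Y : Type*} [TopologicalSpace X] [CompactSpace X] [TopologicalSpace Y]
  {T : X → X} {S : Y → Y} {f : X × Y → ℝ}

lemma fiberInf_le (hT : Continuous T) (hS : Continuous S) (hf : Continuous f) (n : ℕ)
    (x : X) (y : Y) : fiberInf T S f n y ≤ birkhoffAverage ℝ (Prod.map T S) f n (x, y) :=
  ciInf_le (isCompact_range ((continuous_birkhoffAverage (hT.prodMap hS) hf n).comp
    (.prodMk_left y))).bddBelow x

lemma exists_birkhoffAverage_eq_fiberInf [Nonempty X] (hT : Continuous T) (hS : Continuous S)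
    (hf : Continuous f) (n : ℕ) (y : Y) :
    ∃ x, birkhoffAverage ℝ (Prod.map T S) f n (x, y) = fiberInf T S f n y :=
  (isCompact_range ((continuous_birkhoffAverage (hT.prodMap hS) hf n).comp
    (.prodMk_left y))).sInf_mem (Set.range_nonempty _)

lemma continuous_fiberInf (hT : Continuous T) (hS : Continuous S) (hf : Continuous f) (n : ℕ) :
    Continuous (fiberInf T S f n) := by
  have h := isCompact_univ.continuous_sInf (f := fun y x =>
    birkhoffAverage ℝ (Prod.map T S) f n (x, y))
    ((continuous_birkhoffAverage (hT.prodMap hS) hf n).comp continuous_swap)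
  unfold fiberInf iInf
  simpa only [Set.image_univ] using h

variable [CompactSpace Y] [MeasurableSpace X] [MeasurableSpace Y]

lemma psi2_le (hf : Continuous f) {ν : ProbabilityMeasure Y} {lam : ProbabilityMeasure (X × Y)}
    (hlam : lam ∈ invMeas (Prod.map T S)) (hp : lam.toMeasure.map Prod.snd = ν.toMeasure) :
    psi2 T S f ν ≤ ∫ p, f p ∂lam.toMeasure := by
  obtain ⟨C, hC⟩ := exists_forall_abs_le_of_continuous hf
  refine csInf_le ⟨-C, ?_⟩ ⟨lam, hlam, hp, rfl⟩
  rintro r ⟨μ, -, -, rfl⟩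
  have h := norm_integral_le_of_norm_le_const (μ := μ.toMeasure) (f := f) (ae_of_all _ hC)
  rw [probReal_univ, mul_one] at h
  exact (abs_le.1 h).1

variable [T2Space X] [SecondCountableTopology X] [BorelSpace X]
  [T2Space Y] [SecondCountableTopology Y] [BorelSpace Y]

-- The empirical measures are those of the graphs of `φ n`, whose second marginals are all `ν`.
lemma exists_joining_tendsto_integral_birkhoffAverage (hT : Continuous T) (hS : Continuous S)
    {ν : ProbabilityMeasure Y} (hν : ν ∈ invMeas S) {φ : ℕ → Y → X} (hφ : ∀ n, Measurable (φ n))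
    {m : ℕ → ℕ} (hm₀ : ∀ n, m n ≠ 0) (hm : Tendsto m atTop atTop) :
    ∃ lam ∈ invMeas (Prod.map T S), lam.toMeasure.map Prod.snd = ν.toMeasure ∧
      ∀ g : X × Y → ℝ, Continuous g →
        Tendsto (fun n => ∫ y, birkhoffAverage ℝ (Prod.map T S) g (m n) (φ n y, y) ∂ν.toMeasure)
          (hyperfilter ℕ) (𝓝 (∫ p, g p ∂lam.toMeasure)) := by
  have hTS : Continuous (Prod.map T S) := hT.prodMap hS
  have hgraph (n : ℕ) : Measurable fun y => (φ n y, y) := (hφ n).prodMk measurable_id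
  obtain ⟨lam, hlam, hlim⟩ := exists_mem_invMeas_tendsto_integral_birkhoffAverage hTS
    (fun n => ν.map (hgraph n).aemeasurable) hm₀ hm
  have hlim' (g : X × Y → ℝ) (hg : Continuous g) :
      Tendsto (fun n => ∫ y, birkhoffAverage ℝ (Prod.map T S) g (m n) (φ n y, y) ∂ν.toMeasure)
        (hyperfilter ℕ) (𝓝 (∫ p, g p ∂lam.toMeasure)) := by
    refine (hlim g hg).congr fun n => ?_
    rw [ProbabilityMeasure.toMeasure_map, integral_map (hgraph n).aemeasurable
      (continuous_birkhoffAverage hTS hg _).aestronglyMeasurable]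
  refine ⟨lam, hlam, ?_, hlim'⟩
  have : IsProbabilityMeasure (lam.toMeasure.map Prod.snd) :=
    Measure.isProbabilityMeasure_map measurable_snd.aemeasurable
  refine measure_ext_of_integral_continuous fun h hh => ?_
  rw [integral_map measurable_snd.aemeasurable hh.aestronglyMeasurable]
  refine tendsto_nhds_unique (hlim' _ (hh.comp continuous_snd)) ?_
  simp only [birkhoffAverage_snd, integral_birkhoffAverage
    (measurePreserving_of_mem_invMeas hS.measurable hν) (integrable_of_continuous hh) (hm₀ _)]
  exact tendsto_const_nhds

variable [Nonempty X]

lemma le_psi2 (hT : Continuous T) (hS : Continuous S) {ν : ProbabilityMeasure Y}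
    (hν : ν ∈ invMeas S) {c : ℝ}
    (h : ∀ lam ∈ invMeas (Prod.map T S), lam.toMeasure.map Prod.snd = ν.toMeasure →
      c ≤ ∫ p, f p ∂lam.toMeasure) : c ≤ psi2 T S f ν := by
  obtain ⟨x⟩ := ‹Nonempty X›
  obtain ⟨lam, hlam, hp, -⟩ := exists_joining_tendsto_integral_birkhoffAverage hT hS hν
    (fun _ => measurable_const (a := x)) Nat.succ_ne_zero (tendsto_add_atTop_nat 1)
  refine le_csInf ⟨_, lam, hlam, hp, rfl⟩ ?_
  rintro r ⟨μ, hμ, hμp, rfl⟩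
  exact h μ hμ hμp

lemma integral_fiberInf_le_psi2 (hT : Continuous T) (hS : Continuous S) (hf : Continuous f)
    {ν : ProbabilityMeasure Y} (hν : ν ∈ invMeas S) {n : ℕ} (hn : n ≠ 0) :
    ∫ y, fiberInf T S f n y ∂ν.toMeasure ≤ psi2 T S f ν := by
  refine le_psi2 hT hS hν fun lam hlam hp => ?_
  have hTS : Continuous (Prod.map T S) := hT.prodMap hS
  have hinf := continuous_fiberInf hT hS hf n
  calc ∫ y, fiberInf T S f n y ∂ν.toMeasure
      = ∫ p, fiberInf T S f n p.2 ∂lam.toMeasure := by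
        rw [← hp, integral_map measurable_snd.aemeasurable hinf.aestronglyMeasurable]
    _ ≤ ∫ p, birkhoffAverage ℝ (Prod.map T S) f n p ∂lam.toMeasure :=
        integral_mono (integrable_of_continuous (hinf.comp continuous_snd))
          (integrable_of_continuous (continuous_birkhoffAverage hTS hf n))
          fun p => fiberInf_le hT hS hf n p.1 p.2
    _ = ∫ p, f p ∂lam.toMeasure :=
        integral_birkhoffAverage (measurePreserving_of_mem_invMeas hTS.measurable hlam)
          (integrable_of_continuous hf) hn

lemma psi2_le_of_forall_integral_fiberInf_le (hT : Continuous T) (hS : Continuous S)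
    (hf : Continuous f) {ν : ProbabilityMeasure Y} (hν : ν ∈ invMeas S) {m : ℕ → ℕ}
    (hm₀ : ∀ n, m n ≠ 0) (hm : Tendsto m atTop atTop) {c : ℝ}
    (h : ∀ n, ∫ y, fiberInf T S f (m n) y ∂ν.toMeasure ≤ c) : psi2 T S f ν ≤ c := by
  refine le_of_forall_pos_le_add fun ε hε => ?_
  have havg (n : ℕ) := continuous_birkhoffAverage (hT.prodMap hS) hf n
  have hinf (n : ℕ) := continuous_fiberInf hT hS hf n
  have hsel (n : ℕ) : ∃ φ : Y → X, Measurable φ ∧ ∀ y,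
      birkhoffAverage ℝ (Prod.map T S) f (m n) (φ y, y) < fiberInf T S f (m n) y + ε := by
    refine exists_measurable_lt (fun y => (havg _).comp (.prodMk_left y))
      (fun x => ((havg _).comp (.prodMk_right x)).measurable)
      ((hinf _).measurable.add_const ε) fun y => ?_
    obtain ⟨x, hx⟩ := exists_birkhoffAverage_eq_fiberInf hT hS hf (m n) y
    exact ⟨x, hx.trans_lt (lt_add_of_pos_right _ hε)⟩
  choose φ hφ hφlt using hsel
  obtain ⟨lam, hlam, hp, hlim⟩ :=
    exists_joining_tendsto_integral_birkhoffAverage hT hS hν hφ hm₀ hm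
  refine (psi2_le hf hlam hp).trans (le_of_tendsto' (hlim f hf) fun n => ?_)
  have hint : Integrable (fun y => fiberInf T S f (m n) y + ε) ν.toMeasure :=
    integrable_of_continuous ((hinf _).add continuous_const)
  obtain ⟨C, hC⟩ := exists_forall_abs_le_of_continuous (havg (m n))
  have hint' : Integrable (fun y => birkhoffAverage ℝ (Prod.map T S) f (m n) (φ n y, y))
      ν.toMeasure :=
    .of_bound ((havg _).measurable.comp ((hφ n).prodMk measurable_id)).aestronglyMeasurable C
      (ae_of_all _ fun y => hC _)
  refine (integral_mono hint' hint fun y => (hφlt n y).le).trans ?_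
  rw [integral_add (integrable_of_continuous (hinf _)) (integrable_const ε), integral_const,
    probReal_univ, one_smul]
  exact add_le_add_left (h n) ε

end RelativeMinimum

section BlockSpecification

/-- Orbit segments of a common length `N` can be glued consecutively into one orbit which follows
each of them, up to any prescribed entourage, except at a number of times that is bounded
independently of `N` and of the number of segments. Entourages are encoded as neighbourhoods of
the diagonal. -/
def HasBlockSpecification {X : Type*} [TopologicalSpace X] (T : X → X) : Prop :=
  ∀ V ∈ 𝓝ˢ (Set.diagonal X), ∃ L : ℕ, ∀ (N n : ℕ) (x : ℕ → X), ∃ x' : X, ∀ k < n,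
    ∃ B : Finset ℕ, B.card ≤ L ∧
      ∀ i < N, i ∉ B → (T^[i] (T^[N * k] x'), T^[i] (x k)) ∈ V

lemma sum_le_sum_add_of_forall_notMem_le {ι : Type*} {s B : Finset ι} {a b : ι → ℝ} {ε c : ℝ}
    (hε : 0 ≤ ε) (hc : 0 ≤ c) (hle : ∀ i ∈ s, a i ≤ b i + c)
    (hleB : ∀ i ∈ s, i ∉ B → a i ≤ b i + ε) :
    ∑ i ∈ s, a i ≤ ∑ i ∈ s, b i + (s.card * ε + B.card * c) := by
  classical
  calc ∑ i ∈ s, a i ≤ ∑ i ∈ s, (b i + (ε + if i ∈ B then c else 0)) := by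
        refine Finset.sum_le_sum fun i hi => ?_
        split_ifs with hiB
        · linarith [hle i hi]
        · linarith [hleB i hi hiB]
    _ = ∑ i ∈ s, b i + (s.card * ε + (s ∩ B).card * c) := by
        simp only [Finset.sum_add_distrib, Finset.sum_const, nsmul_eq_mul, Finset.sum_ite_mem]
    _ ≤ ∑ i ∈ s, b i + (s.card * ε + B.card * c) := by
        gcongr
        exact Finset.inter_subset_right

lemma birkhoffAverage_le_birkhoffAverage_add {Z W : Type*} {U : Z → Z} {V : W → W} {g : Z → ℝ}
    {h : W → ℝ} {n : ℕ} {z : Z} {w : W} {B : Finset ℕ} {ε c : ℝ} (hε : 0 ≤ ε) (hc : 0 ≤ c)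
    (hle : ∀ i < n, g (U^[i] z) ≤ h (V^[i] w) + c)
    (hleB : ∀ i < n, i ∉ B → g (U^[i] z) ≤ h (V^[i] w) + ε) :
    birkhoffAverage ℝ U g n z ≤ birkhoffAverage ℝ V h n w + (ε + B.card * c / n) := by
  obtain rfl | hn := eq_or_ne n 0
  · simpa using hε
  have hsum : birkhoffSum U g n z ≤ birkhoffSum V h n w + (n * ε + B.card * c) := by
    simpa only [birkhoffSum, Finset.card_range] using sum_le_sum_add_of_forall_notMem_le hε hc
      (fun i hi => hle i (Finset.mem_range.1 hi)) fun i hi => hleB i (Finset.mem_range.1 hi)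
  simp only [birkhoffAverage, smul_eq_mul]
  calc (n : ℝ)⁻¹ * birkhoffSum U g n z
      ≤ (n : ℝ)⁻¹ * (birkhoffSum V h n w + (n * ε + B.card * c)) := by gcongr
    _ = (n : ℝ)⁻¹ * birkhoffSum V h n w + (ε + B.card * c / n) := by
        rw [mul_add, mul_add, inv_mul_cancel_left₀ (Nat.cast_ne_zero.2 hn),
          inv_mul_eq_div (n : ℝ) (B.card * c)]

variable {X Y : Type*} [TopologicalSpace X] [TopologicalSpace Y] [CompactSpace Y]
  {T : X → X} {S : Y → Y} {f : X × Y → ℝ}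

lemma setOf_forall_le_add_mem_nhdsSet_diagonal (hf : Continuous f) {ε : ℝ} (hε : 0 < ε) :
    {q : X × X | ∀ y, f (q.1, y) ≤ f (q.2, y) + ε} ∈ 𝓝ˢ (Set.diagonal X) := by
  let F : C(X, C(Y, ℝ)) := ContinuousMap.curry ⟨f, hf⟩
  have hopen : IsOpen {q : X × X | dist (F q.1) (F q.2) < ε} :=
    isOpen_lt (by fun_prop) continuous_const
  refine mem_of_superset (hopen.mem_nhdsSet.2 ?_) fun q hq y => ?_
  · rintro ⟨x, x'⟩ (rfl : x = x')
    simpa only [Set.mem_ofPred_eq, dist_self] using hε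
  · have h := ((F q.1).dist_apply_le_dist (g := F q.2) y).trans_lt hq
    rw [Real.dist_eq] at h
    have := (abs_lt.1 h).2
    change f (q.1, y) - f (q.2, y) < ε at this
    linarith

variable [CompactSpace X]

lemma HasBlockSpecification.exists_birkhoffAverage_le (hspec : HasBlockSpecification T)
    (S : Y → Y) (hf : Continuous f) {ε : ℝ} (hε : 0 < ε) :
    ∃ N ≠ 0, ∀ (n : ℕ) (x : ℕ → X), ∃ x', ∀ k < n, ∀ y,
      birkhoffAverage ℝ (Prod.map T S) f N (T^[N * k] x', y) ≤
        birkhoffAverage ℝ (Prod.map T S) f N (x k, y) + ε := by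
  obtain ⟨C, hC⟩ := exists_forall_abs_le_of_continuous hf
  obtain ⟨L, hL⟩ := hspec _ (setOf_forall_le_add_mem_nhdsSet_diagonal hf (half_pos hε))
  obtain ⟨N, hN⟩ := exists_nat_gt (L * (2 * |C|) / (ε / 2))
  have hN₀ : (0 : ℝ) < N := lt_of_le_of_lt (by positivity) hN
  rw [div_lt_iff₀ (half_pos hε)] at hN
  refine ⟨N, (Nat.cast_pos.1 hN₀).ne', fun n x => ?_⟩
  obtain ⟨x', hx'⟩ := hL N n x
  refine ⟨x', fun k hk y => ?_⟩
  obtain ⟨B, hB, hclose⟩ := hx' k hk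
  have hle (p q : X × Y) : f p ≤ f q + 2 * |C| := by
    linarith [abs_le.1 (hC p), abs_le.1 (hC q), le_abs_self C]
  refine (birkhoffAverage_le_birkhoffAverage_add (B := B) (half_pos hε).le
    (by positivity) (fun i _ => hle _ _) fun i hi hiB => ?_).trans (add_le_add_right ?_ _)
  · simp only [Prod.map_iterate, Prod.map_apply]
    exact hclose i hi hiB _
  · have : B.card * (2 * |C|) / N ≤ ε / 2 := by
      rw [div_le_iff₀ hN₀]
      calc (B.card : ℝ) * (2 * |C|) ≤ L * (2 * |C|) := by gcongr
        _ ≤ ε / 2 * N := by linarith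
    linarith

lemma HasBlockSpecification.exists_fiberInf_mul_le [Nonempty X] (hspec : HasBlockSpecification T)
    (hT : Continuous T) (hS : Continuous S) (hf : Continuous f) {ε : ℝ} (hε : 0 < ε) :
    ∃ N ≠ 0, ∀ n y, fiberInf T S f (N * n) y ≤
      birkhoffAverage ℝ S^[N] (fiberInf T S f N) n y + ε := by
  obtain ⟨N, hN₀, hN⟩ := hspec.exists_birkhoffAverage_le S hf hε
  refine ⟨N, hN₀, fun n y => ?_⟩
  choose x hx using fun k => exists_birkhoffAverage_eq_fiberInf hT hS hf N ((S^[N])^[k] y)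
  obtain ⟨x', hx'⟩ := hN n x
  have hblock : ∀ k < n,
      birkhoffAverage ℝ (Prod.map T S) f N (((Prod.map T S)^[N])^[k] (x', y)) ≤
        fiberInf T S f N ((S^[N])^[k] y) + ε := by
    intro k hk
    rw [← hx k, ← Function.iterate_mul, ← Function.iterate_mul, Prod.map_iterate]
    exact hx' k hk _
  refine (fiberInf_le hT hS hf (N * n) x' y).trans ?_
  rw [birkhoffAverage_mul]
  simpa using birkhoffAverage_le_birkhoffAverage_add (B := ∅) hε.le hε.le hblock
    fun k hk _ => hblock k hk

variable [MeasurableSpace X] [MeasurableSpace Y] [T2Space X] [SecondCountableTopology X]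
  [BorelSpace X] [T2Space Y] [SecondCountableTopology Y] [BorelSpace Y] [Nonempty X]

lemma HasBlockSpecification.exists_forall_abs_psi2_sub_integral_le
    (hspec : HasBlockSpecification T) (hT : Continuous T) (hS : Continuous S) (hf : Continuous f)
    {ε : ℝ} (hε : 0 < ε) :
    ∃ g : Y → ℝ, Continuous g ∧
      ∀ ν ∈ invMeas S, |psi2 T S f ν - ∫ y, g y ∂ν.toMeasure| ≤ ε := by
  obtain ⟨N, hN₀, hN⟩ := hspec.exists_fiberInf_mul_le hT hS hf hε
  have hinf (n : ℕ) := continuous_fiberInf hT hS hf n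
  refine ⟨fiberInf T S f N, hinf N, fun ν hν => ?_⟩
  have hupper : psi2 T S f ν ≤ ∫ y, fiberInf T S f N y ∂ν.toMeasure + ε := by
    refine psi2_le_of_forall_integral_fiberInf_le hT hS hf hν
      (fun n => mul_ne_zero hN₀ n.succ_ne_zero)
      ((tendsto_add_atTop_nat 1).const_mul_atTop' (Nat.pos_of_ne_zero hN₀)) fun n => ?_
    have havg := continuous_birkhoffAverage (hS.iterate N) (hinf N) (n + 1)
    refine (integral_mono (integrable_of_continuous (hinf _))
      (integrable_of_continuous (havg.add continuous_const)) (hN (n + 1))).trans_eq ?_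
    rw [integral_add' (integrable_of_continuous havg) (integrable_const ε), integral_const,
      probReal_univ, one_smul, integral_birkhoffAverage
        ((measurePreserving_of_mem_invMeas hS.measurable hν).iterate N)
        (integrable_of_continuous (hinf N)) n.succ_ne_zero]
  rw [abs_of_nonneg (sub_nonneg.2 (integral_fiberInf_le_psi2 hT hS hf hν hN₀))]
  linarith

end BlockSpecification

lemma psi2_eq_alpha2_of_isMaxOn {X Y : Type*} [MeasurableSpace X] [MeasurableSpace Y]
    {T : X → X} {S : Y → Y} {f : X × Y → ℝ} {ν₀ : ProbabilityMeasure Y} (hν₀ : ν₀ ∈ invMeas S)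
    (hmax : IsMaxOn (psi2 T S f) (invMeas S) ν₀) : psi2 T S f ν₀ = alpha2 T S f := by
  have hgreatest : IsGreatest {r | ∃ ν ∈ invMeas S, r = psi2 T S f ν} (psi2 T S f ν₀) := by
    refine ⟨⟨ν₀, hν₀, rfl⟩, ?_⟩
    rintro r ⟨ν, hν, rfl⟩
    exact hmax hν
  exact hgreatest.csSup_eq.symm

section Shifts

variable {A : Type*} {X : Set (ℤ → A)} {TX : X → X}

/-- The sequences of `X` can be glued across every gap of length at least `D`. A shift is
transitive when this holds for some `D`. -/
def GluesAcrossGap (X : Set (ℤ → A)) (D : ℕ) : Prop :=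
  ∀ x₁ ∈ X, ∀ x₂ ∈ X, ∀ b₁ a₂ : ℤ, (D : ℤ) ≤ a₂ - b₁ →
    ∃ x' ∈ X, (∀ j : ℤ, j ≤ b₁ → x' j = x₁ j) ∧ (∀ j : ℤ, a₂ ≤ j → x' j = x₂ j)

lemma surjective_of_lshift_image (hX : lshift '' X = X)
    (hTX : ∀ x : X, (TX x : ℤ → A) = lshift ↑x) : Function.Surjective TX := by
  rintro ⟨x, hx⟩
  obtain ⟨z, hz, rfl⟩ := hX.symm ▸ hx
  exact ⟨⟨z, hz⟩, Subtype.ext (hTX _)⟩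

lemma continuous_of_lshift [TopologicalSpace A] (hTX : ∀ x : X, (TX x : ℤ → A) = lshift ↑x) :
    Continuous TX := by
  refine continuous_induced_rng.2 (continuous_pi fun j => ?_)
  simp only [Function.comp_apply, hTX, lshift]
  exact (continuous_apply (j + 1)).comp continuous_subtype_val

lemma iterate_lshift_apply (hTX : ∀ x : X, (TX x : ℤ → A) = lshift ↑x) (n : ℕ) (x : X) (j : ℤ) :
    (TX^[n] x : ℤ → A) j = (x : ℤ → A) (j + n) := by
  induction n generalizing j with
  | zero => simp
  | succ n ih =>
    rw [Function.iterate_succ_apply', hTX, lshift, ih, Nat.cast_succ, add_right_comm, add_assoc]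

lemma exists_window_of_mem_nhdsSet_diagonal [TopologicalSpace A] [DiscreteTopology A]
    [CompactSpace X] {V : Set (X × X)} (hV : V ∈ 𝓝ˢ (Set.diagonal X)) :
    ∃ r : ℕ, ∀ x x' : X, (∀ j : ℤ, |j| ≤ r → (x : ℤ → A) j = (x' : ℤ → A) j) → (x, x') ∈ V := by
  let Q (r : ℕ) : Set (X × X) := {q | ∀ j : ℤ, |j| ≤ r → (q.1 : ℤ → A) j = (q.2 : ℤ → A) j}
  have hcl (r : ℕ) : IsClosed (Q r) := by
    simp only [Q, Set.ofPred_forall]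
    exact isClosed_iInter fun j => isClosed_iInter fun _ => isClosed_eq
      ((continuous_apply j).comp (continuous_subtype_val.comp continuous_fst))
      ((continuous_apply j).comp (continuous_subtype_val.comp continuous_snd))
  have hanti : Antitone Q := fun r s hrs q hq j hj => hq j (hj.trans (Nat.cast_le.2 hrs))
  have hdiag : ∀ q ∈ ⋂ r, Q r, V ∈ 𝓝 q := by
    refine fun q hq => mem_nhdsSet_iff_forall.1 hV q (Subtype.ext (funext fun j => ?_))
    exact Set.mem_iInter.1 hq j.natAbs j (Int.natCast_natAbs j).ge
  obtain ⟨r, hr⟩ := exists_subset_nhds_of_compactSpace hanti.directed_ge hcl hdiag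
  exact ⟨r, fun x x' h => hr h⟩

lemma GluesAcrossGap.exists_concatenation {D : ℕ} (hX : GluesAcrossGap X D)
    (hsurj : Function.Surjective TX) (hTX : ∀ x : X, (TX x : ℤ → A) = lshift ↑x)
    (N n : ℕ) (x : ℕ → X) :
    ∃ x' : X, ∀ k < n, ∀ j : ℤ, 0 ≤ j → j + D ≤ N →
      (x' : ℤ → A) (j + (N * k : ℕ)) = (x k : ℤ → A) j := by
  induction n with
  | zero => exact ⟨x 0, fun k hk => absurd hk k.not_lt_zero⟩
  | succ n ih =>
    obtain ⟨u, hu⟩ := ih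
    obtain ⟨z, hz⟩ := hsurj.iterate (N * n) (x n)
    obtain ⟨x', hx', hleft, hright⟩ := hX u u.2 z z.2 ((N * n : ℕ) - D) (N * n : ℕ) (by simp)
    refine ⟨⟨x', hx'⟩, fun k hk j hj hjD => ?_⟩
    obtain rfl | hkn := eq_or_lt_of_le (Nat.le_of_lt_succ hk)
    · rw [← hz, iterate_lshift_apply hTX]
      exact hright _ (by omega)
    · have hblock : N * k + N ≤ N * n := by
        rw [← Nat.mul_succ]
        exact Nat.mul_le_mul_left N hkn
      exact (hleft _ (by omega)).trans (hu k hkn j hj hjD)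

-- Gluing loses the last `D` symbols of a block, and the entourage sees `r` symbols on either side.
lemma GluesAcrossGap.hasBlockSpecification [TopologicalSpace A] [DiscreteTopology A]
    [CompactSpace X] {D : ℕ} (hX : GluesAcrossGap X D) (hsurj : Function.Surjective TX)
    (hTX : ∀ x : X, (TX x : ℤ → A) = lshift ↑x) : HasBlockSpecification TX := by
  intro V hV
  obtain ⟨r, hr⟩ := exists_window_of_mem_nhdsSet_diagonal hV
  refine ⟨r + (r + D), fun N n x => ?_⟩
  obtain ⟨x', hx'⟩ := hX.exists_concatenation hsurj hTX N n x
  refine ⟨x', fun k hk => ⟨Finset.range r ∪ Finset.Ico (N - (r + D)) N, ?_, fun i hi hiB => ?_⟩⟩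
  · refine (Finset.card_union_le _ _).trans ?_
    rw [Finset.card_range, Nat.card_Ico]
    omega
  · simp only [Finset.mem_union, Finset.mem_range, Finset.mem_Ico, not_or] at hiB
    refine hr _ _ fun j hj => ?_
    rw [abs_le] at hj
    simp only [iterate_lshift_apply hTX]
    exact hx' k hk (j + i) (by omega) (by omega)

end Shifts

theorem stmt19_general {X Y : Type*}
    [TopologicalSpace X] [CompactSpace X] [T2Space X] [SecondCountableTopology X]
    [MeasurableSpace X] [BorelSpace X] [Nonempty X]
    [TopologicalSpace Y] [CompactSpace Y] [T2Space Y] [SecondCountableTopology Y]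
    [MeasurableSpace Y] [BorelSpace Y] [Nonempty Y]
    {T : X → X} (hT : Continuous T) (hspec : HasBlockSpecification T)
    {S : Y → Y} (hS : Continuous S) {f : X × Y → ℝ} (hf : Continuous f) :
    ContinuousOn (psi2 T S f) (invMeas S) ∧
    AffineOnMeasures (psi2 T S f) (invMeas S) ∧
    ∃ ν₀ ∈ invMeas S, Ergodic S ν₀.toMeasure ∧ psi2 T S f ν₀ = alpha2 T S f := by
  have happrox : ∀ ε > 0, ∃ g : Y → ℝ, Continuous g ∧
      ∀ ν ∈ invMeas S, |psi2 T S f ν - ∫ y, g y ∂ν.toMeasure| ≤ ε := fun ε hε =>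
    hspec.exists_forall_abs_psi2_sub_integral_le hT hS hf hε
  have hcont := continuousOn_of_forall_abs_sub_integral_le happrox
  have haff := affineOnMeasures_of_forall_abs_sub_integral_le hS.measurable happrox
  obtain ⟨ν₀, hν₀, herg, hmax⟩ := exists_ergodic_isMaxOn hS hcont haff
  exact ⟨hcont, haff, ν₀, hν₀, herg, psi2_eq_alpha2_of_isMaxOn hν₀ hmax⟩

/-- let `A` be a finite alphabet, `X ⊆ A^ℤ` a transitive shift of finite
type and `Y ⊆ A^ℤ` any shift (with the restricted left shifts `T`, `S`).  Then for
every continuous `f ∈ C(X × Y)` the functional `ψ_f : M_S(Y) → ℝ` is continuous and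
affine, and in particular there exists an ergodic `α`-maximizing measure for `f`. -/
theorem stmt19
    {A : Type*} [Fintype A] [TopologicalSpace A] [DiscreteTopology A]
    [MeasurableSpace A] [BorelSpace A]
    (X Y : Set (ℤ → A))
    (hXne : X.Nonempty) (hYne : Y.Nonempty)
    (hXcl : IsCompact X) (hYcl : IsCompact Y)
    (hXinv : lshift '' X = X) (hYinv : lshift '' Y = Y)
    -- `X` is a shift of finite type
    (hSFT : ∃ (M : ℕ) (F : Set (Fin (M + 1) → A)),
      X = {x : ℤ → A | ∀ j : ℤ, (fun i : Fin (M + 1) => x (j + (i : ℤ))) ∉ F})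
    -- `X` is transitive
    (hTrans : ∃ D : ℕ, ∀ x₁ ∈ X, ∀ x₂ ∈ X, ∀ b₁ a₂ : ℤ, (D : ℤ) ≤ a₂ - b₁ →
      ∃ x' ∈ X, (∀ j : ℤ, j ≤ b₁ → x' j = x₁ j) ∧ (∀ j : ℤ, a₂ ≤ j → x' j = x₂ j))
    -- the restricted shift maps
    (TX : X → X) (SY : Y → Y)
    (hTX : ∀ x : X, (TX x : ℤ → A) = lshift ↑x)
    (hSY : ∀ y : Y, (SY y : ℤ → A) = lshift ↑y)
    (f : X × Y → ℝ) (hf : Continuous f) :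
    -- `ψ_f` is continuous on `M_S(Y)`
    ContinuousOn (psi2 TX SY f) (invMeas SY) ∧
    -- `ψ_f` is affine on `M_S(Y)`
    (∀ ν₁ ∈ invMeas SY, ∀ ν₂ ∈ invMeas SY, ∀ t : ℝ≥0, t ≤ 1 →
      ∀ ν : ProbabilityMeasure Y,
        ν.toMeasure = (t : ℝ≥0∞) • ν₁.toMeasure + (1 - (t : ℝ≥0∞)) • ν₂.toMeasure →
        psi2 TX SY f ν = (t : ℝ) * psi2 TX SY f ν₁ + (1 - (t : ℝ)) * psi2 TX SY f ν₂) ∧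
    -- an ergodic `α`-maximizing measure exists
    (∃ ν₀ ∈ invMeas SY, Ergodic SY ν₀.toMeasure ∧
      psi2 TX SY f ν₀ = alpha2 TX SY f) := by
  have : Nonempty X := hXne.to_subtype
  have : Nonempty Y := hYne.to_subtype
  have : CompactSpace X := isCompact_iff_compactSpace.1 hXcl
  have : CompactSpace Y := isCompact_iff_compactSpace.1 hYcl
  obtain ⟨D, hD⟩ := hTrans
  have hspec : HasBlockSpecification TX :=
    GluesAcrossGap.hasBlockSpecification hD (surjective_of_lshift_image hXinv hTX) hTX
  exact stmt19_general (continuous_of_lshift hTX) hspec (continuous_of_lshift hSY) hf
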